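/- Let 0 ≤ j ≤ k ≤ n be natural numbers and let ρ ∈ P_{1,2}^{j,k}(n). Let A ⊆ {1,…,n−k} be the set of left endpoints of the pairs of ρ and B ⊆ {n−k+1,…,n} the set of right endpoints, and let σ_ρ ∈ S_j be the permutation with σ_ρ(s) = t precisely when the s-th smallest element of A is paired in ρ with the t-th smallest element of B. Set ι(A) = #{(c,a) : c ∈ {1,…,n−k}∖A, a ∈ A, a < c}, ι(B) = #{(c,b) : c ∈ {n−k+1,…,n}∖B, b ∈ B, c < b}, and let inv(σ_ρ) be the number of inversions of σ_ρ. Then ι′(ρ) = ι(A) + ι(B) + inv(σ_ρ) + j(j−1)/2. -/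

import Mathlib

/-- A partition of `{1,…,n}` all of whose blocks are singletons or pairs, encoded as a
finite set of pairwise disjoint nonempty blocks covering `Finset.Icc 1 n`. -/
def IsP12 (n : ℕ) (ρ : Finset (Finset ℕ)) : Prop :=
  (ρ : Set (Finset ℕ)).PairwiseDisjoint id ∧
    ρ.sup id = Finset.Icc 1 n ∧ ∀ b ∈ ρ, b.card = 1 ∨ b.card = 2

/-- The recursive definition of the modified crossing number `ι′`, as a relation:
`ι′` of a partition with no pairs is `0`, and if `ρ'` is obtained from `ρ` by replacing the
singletons `{ℓ1}`, `{ℓ2}` (`ℓ1 < ℓ2`, `ℓ1` smaller than the left endpoint of every pair of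
`ρ`) by the pair `{ℓ1, ℓ2}`, then `ι′(ρ') = ι′(ρ) + #{singletons of ρ strictly between
ℓ1 and ℓ2} + 2·#{pairs of ρ nested inside (ℓ1, ℓ2)}`. -/
inductive Iota' : Finset (Finset ℕ) → ℕ → Prop
  | base (ρ : Finset (Finset ℕ)) (h : ∀ b ∈ ρ, b.card = 1) : Iota' ρ 0
  | step (ρ : Finset (Finset ℕ)) (v ℓ1 ℓ2 : ℕ)
      (h1 : ({ℓ1} : Finset ℕ) ∈ ρ) (h2 : ({ℓ2} : Finset ℕ) ∈ ρ) (hlt : ℓ1 < ℓ2)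
      (hmin : ∀ b ∈ ρ, b.card = 2 → ∀ x ∈ b, ℓ1 < x)
      (hv : Iota' ρ v) :
      Iota' (insert ({ℓ1, ℓ2} : Finset ℕ) ((ρ.erase {ℓ1}).erase {ℓ2}))
        (v + (ρ.filter fun b => b.card = 1 ∧ ∀ m ∈ b, ℓ1 < m ∧ m < ℓ2).card
           + 2 * (ρ.filter fun b => b.card = 2 ∧ ∀ x ∈ b, ℓ1 < x ∧ x < ℓ2).card)

/-- closed form of `ι′` -/
theorem iota_closed (ρ : Finset (Finset ℕ)) (v : ℕ) (hv : Iota' ρ v) :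
    ∀ (S : Finset ℕ) (M : Finset (ℕ × ℕ)), (∀ m, m ∈ S ↔ ({m} : Finset ℕ) ∈ ρ) →
      (∀ p : ℕ × ℕ, p ∈ M ↔ p.1 < p.2 ∧ ({p.1, p.2} : Finset ℕ) ∈ ρ) →
      v = (∑ m ∈ S, ∑ P ∈ M, if P.1 < m ∧ m < P.2 then 1 else 0)
        + (∑ P ∈ M, ∑ Q ∈ M, if P.1 < Q.1 ∧ Q.1 < P.2 ∧ P.2 < Q.2 then 1 else 0)
        + 2 * (∑ P ∈ M, ∑ Q ∈ M, if P.1 < Q.1 ∧ Q.2 < P.2 then 1 else 0) := by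
  induction hv with
  | base ρ h =>
    intro S M hS hM
    have : M = ∅ := by
      apply Finset.eq_empty_of_forall_notMem
      intro p hp
      obtain ⟨h1, h2⟩ := (hM p).1 hp
      have := h _ h2
      rw [Finset.card_pair h1.ne] at this
      omega
    subst this
    simp
  | step ρ v l1 l2 h1 h2 hlt hmin hv ih =>
    intro S' M' hS' hM'
    have hsing : ∀ m, ({m} : Finset ℕ) ≠ {l1, l2} := by
      intro m h
      have := congrArg Finset.card h
      rw [Finset.card_pair hlt.ne] at this
      simp at this
    have hpne : ∀ (p : ℕ × ℕ) m, p.1 < p.2 → ({p.1, p.2} : Finset ℕ) ≠ {m} := by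
      intro p m hp h
      have := congrArg Finset.card h
      rw [Finset.card_pair hp.ne] at this
      simp at this
    have hl1 : l1 ∉ S' := by
      rw [hS']; simp [hsing]
    have hl2 : l2 ∉ S' := by
      rw [hS']; simp [hsing]
    have hnot : ({l1, l2} : Finset ℕ) ∉ ρ := by
      intro h
      have := hmin _ h (Finset.card_pair hlt.ne) l1 (by simp)
      omega
    have hLM : (l1, l2) ∈ M' := by
      rw [hM']; simp [hlt]
    obtain ⟨M, hM0, rfl⟩ : ∃ M, (l1, l2) ∉ M ∧ M' = insert (l1, l2) M :=
      ⟨M'.erase (l1, l2), by simp, by rw [Finset.insert_erase hLM]⟩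
    have hpeq : ∀ p : ℕ × ℕ, p.1 < p.2 → ({p.1, p.2} : Finset ℕ) = {l1, l2} → p = (l1, l2) := by
      intro p hp h
      have a1 : p.1 ∈ ({l1, l2} : Finset ℕ) := by rw [← h]; simp
      have a2 : p.2 ∈ ({l1, l2} : Finset ℕ) := by rw [← h]; simp
      simp only [Finset.mem_insert, Finset.mem_singleton] at a1 a2
      ext <;> simp <;> omega
    have hM : ∀ p : ℕ × ℕ, p ∈ M ↔ p.1 < p.2 ∧ ({p.1, p.2} : Finset ℕ) ∈ ρ := by
      intro p
      have := hM' p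
      constructor
      · intro hp
        obtain ⟨q1, q2⟩ := this.1 (Finset.mem_insert_of_mem hp)
        refine ⟨q1, ?_⟩
        rw [Finset.mem_insert] at q2
        rcases q2 with q2 | q2
        · exact absurd (hpeq p q1 q2 ▸ hp) hM0
        · exact Finset.mem_of_mem_erase (Finset.mem_of_mem_erase q2)
      · rintro ⟨q1, q2⟩
        have h3 := this.2 ⟨q1, Finset.mem_insert_of_mem (Finset.mem_erase.2 ⟨hpne p _ q1,
          Finset.mem_erase.2 ⟨hpne p _ q1, q2⟩⟩)⟩
        rw [Finset.mem_insert] at h3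
        rcases h3 with rfl | h3
        · exact absurd q2 hnot
        · exact h3
    have hS : ∀ m, m ∈ insert l1 (insert l2 S') ↔ ({m} : Finset ℕ) ∈ ρ := by
      intro m
      simp only [Finset.mem_insert, hS', hsing, Finset.mem_erase, ne_eq, Finset.singleton_inj,
        false_or]
      constructor
      · rintro (rfl | rfl | h)
        · exact h1
        · exact h2
        · exact h.2.2
      · intro h
        tauto
    have hgt : ∀ P ∈ M, l1 < P.1 ∧ P.1 < P.2 := by
      intro P hP
      obtain ⟨q1, q2⟩ := (hM P).1 hP
      exact ⟨hmin _ q2 (Finset.card_pair q1.ne) _ (by simp), q1⟩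
    have hc1 : (ρ.filter fun b => b.card = 1 ∧ ∀ m ∈ b, l1 < m ∧ m < l2).card
        = ∑ m ∈ S', if l1 < m ∧ m < l2 then 1 else 0 := by
      rw [← Finset.card_filter]
      symm
      apply Finset.card_bij (fun m _ => ({m} : Finset ℕ))
      · intro m hm
        rw [Finset.mem_filter] at hm
        have := (hS m).1 (by simp [hm.1])
        simp [this, hm.2]
      · intro a _ b _ h
        simpa using h
      · intro b hb
        rw [Finset.mem_filter, Finset.card_eq_one] at hb
        obtain ⟨hb, ⟨m, rfl⟩, hb2⟩ := hb
        have hm := hb2 m (by simp)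
        have := (hS m).2 hb
        simp only [Finset.mem_insert] at this
        refine ⟨m, ?_, rfl⟩
        rw [Finset.mem_filter]
        refine ⟨?_, hm⟩
        rcases this with h | h | h
        · omega
        · omega
        · exact h
    have hc2 : (ρ.filter fun b => b.card = 2 ∧ ∀ x ∈ b, l1 < x ∧ x < l2).card
        = ∑ Q ∈ M, if l1 < Q.1 ∧ Q.2 < l2 then 1 else 0 := by
      rw [← Finset.card_filter]
      symm
      apply Finset.card_bij (fun p _ => ({p.1, p.2} : Finset ℕ))
      · intro p hp
        rw [Finset.mem_filter] at hp
        obtain ⟨q1, q2⟩ := (hM p).1 hp.1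
        rw [Finset.mem_filter]
        refine ⟨q2, Finset.card_pair q1.ne, ?_⟩
        intro x hx
        simp only [Finset.mem_insert, Finset.mem_singleton] at hx
        omega
      · intro p hp q hq h
        rw [Finset.mem_filter] at hp hq
        have p1 := (hM p).1 hp.1
        have q1 := (hM q).1 hq.1
        have a1 : p.1 ∈ ({q.1, q.2} : Finset ℕ) := by rw [← h]; simp
        have a2 : p.2 ∈ ({q.1, q.2} : Finset ℕ) := by rw [← h]; simp
        simp only [Finset.mem_insert, Finset.mem_singleton] at a1 a2
        ext <;> omega
      · intro b hb
        rw [Finset.mem_filter, Finset.card_eq_two] at hb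
        obtain ⟨hb, ⟨x, y, hxy, rfl⟩, hb2⟩ := hb
        have hx := hb2 x (by simp)
        have hy := hb2 y (by simp)
        rcases lt_or_gt_of_ne hxy with h | h
        · exact ⟨(x, y), by rw [Finset.mem_filter, hM]; exact ⟨⟨h, hb⟩, hx.1, hy.2⟩, rfl⟩
        · rw [Finset.pair_comm] at hb ⊢
          exact ⟨(y, x), by rw [Finset.mem_filter, hM]; exact ⟨⟨h, hb⟩, hy.1, hx.2⟩, rfl⟩
    rw [hc1, hc2, ih _ M hS hM]
    rw [Finset.sum_insert (by simp [hl1, hlt.ne]), Finset.sum_insert hl2]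
    simp only [Finset.sum_insert hM0, Finset.sum_add_distrib]
    have z1 : (∑ P ∈ M, if P.1 < l1 ∧ l1 < P.2 then 1 else 0) = 0 :=
      Finset.sum_eq_zero fun P hP => by
        have := hgt P hP
        rw [if_neg (by omega)]
    have z2 : (∑ P ∈ M, if P.1 < l1 ∧ l1 < P.2 ∧ P.2 < l2 then 1 else 0) = 0 :=
      Finset.sum_eq_zero fun P hP => by
        have := hgt P hP
        rw [if_neg (by omega)]
    have z3 : (∑ P ∈ M, if P.1 < l1 ∧ l2 < P.2 then 1 else 0) = 0 :=
      Finset.sum_eq_zero fun P hP => by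
        have := hgt P hP
        rw [if_neg (by omega)]
    have z4 : (∑ Q ∈ M, if l1 < Q.1 ∧ Q.1 < l2 ∧ l2 < Q.2 then 1 else 0)
        = ∑ P ∈ M, if P.1 < l2 ∧ l2 < P.2 then 1 else 0 :=
      Finset.sum_congr rfl fun P hP => by
        have := hgt P hP
        simp [this.1]
    simp only [z1, z2, z3, z4, lt_irrefl, false_and, and_false, if_false]
    ring

theorem count_lt (j : ℕ) :
    (∑ s : Fin j, ∑ t : Fin j, if s < t then 1 else 0) = j * (j - 1) / 2 := by
  rw [← Finset.sum_range_id_mul_two j, Nat.mul_div_cancel _ (by norm_num), Finset.sum_comm,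
    ← Fin.sum_univ_eq_sum_range (fun i => i)]
  apply Finset.sum_congr rfl
  intro t _
  rw [← Finset.card_filter, ← Fin.card_Iio t]
  congr 1
  ext s
  simp

/-- The identity from Lemma 3.8: for `ρ ∈ P_{1,2}^{j,k}(n)` with set of left endpoints `A`,
set of right endpoints `B`, and pairing permutation `σ`,
`ι′(ρ) = ι(A) + ι(B) + inv(σ) + j(j−1)/2`. -/
theorem stmt9 (n k j : ℕ) (hjk : j ≤ k) (hkn : k ≤ n)
    (ρ : Finset (Finset ℕ)) (hρ : IsP12 n ρ)
    (hstraddle : ∀ b ∈ ρ, b.card = 2 → ∀ i ∈ b, ∀ l ∈ b, i < l → i ≤ n - k ∧ n - k + 1 ≤ l)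
    (hpairs : (ρ.filter fun b => b.card = 2).card = j)
    (A B : Finset ℕ)
    (hA : A = (Finset.Icc 1 n).filter fun a =>
      ∃ b ∈ ρ, b.card = 2 ∧ a ∈ b ∧ ∀ x ∈ b, a ≤ x)
    (hB : B = (Finset.Icc 1 n).filter fun a =>
      ∃ b ∈ ρ, b.card = 2 ∧ a ∈ b ∧ ∀ x ∈ b, x ≤ a)
    (hAcard : A.card = j) (hBcard : B.card = j)
    (σ : Equiv.Perm (Fin j))
    (hσ : ∀ s t : Fin j, σ s = t ↔
      ({(A.orderIsoOfFin hAcard s : ℕ), (B.orderIsoOfFin hBcard t : ℕ)} : Finset ℕ) ∈ ρ)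
    (v : ℕ) (hv : Iota' ρ v) :
    v = (((Finset.Icc 1 (n - k) \ A) ×ˢ A).filter fun p => p.2 < p.1).card
      + (((Finset.Icc (n - k + 1) n \ B) ×ˢ B).filter fun p => p.1 < p.2).card
      + ((Finset.univ : Finset (Fin j × Fin j)).filter fun p =>
          p.1 < p.2 ∧ σ p.2 < σ p.1).card
      + j * (j - 1) / 2 := by
  obtain ⟨hdis, hsup, hcard⟩ := hρ
  have hmemI : ∀ b ∈ ρ, ∀ x ∈ b, x ∈ Finset.Icc 1 n := by
    intro b hb x hx
    rw [← hsup, Finset.mem_sup]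
    exact ⟨b, hb, hx⟩
  have huniq : ∀ b ∈ ρ, ∀ c ∈ ρ, ∀ x, x ∈ b → x ∈ c → b = c := by
    intro b hb c hc x hxb hxc
    by_contra hne
    exact Finset.disjoint_left.1 (hdis hb hc hne) hxb hxc
  have htwo : ∀ x y : ℕ, x < y → ({x, y} : Finset ℕ) ∈ ρ →
      x ∈ A ∧ y ∈ B ∧ x ≤ n - k ∧ n - k + 1 ≤ y := by
    intro x y hxy hb
    have hc := Finset.card_pair hxy.ne
    refine ⟨?_, ?_, hstraddle _ hb hc x (by simp) y (by simp) hxy⟩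
    · rw [hA, Finset.mem_filter]
      refine ⟨hmemI _ hb x (by simp), _, hb, hc, by simp, ?_⟩
      simp [hxy.le]
    · rw [hB, Finset.mem_filter]
      refine ⟨hmemI _ hb y (by simp), _, hb, hc, by simp, ?_⟩
      simp [hxy.le]
  have hAex : ∀ a ∈ A, ∃ y, a < y ∧ ({a, y} : Finset ℕ) ∈ ρ := by
    intro a ha
    rw [hA, Finset.mem_filter] at ha
    obtain ⟨-, b, hb, hc, hab, hmin⟩ := ha
    obtain ⟨x, y, hxy, rfl⟩ := Finset.card_eq_two.1 hc
    have hx := hmin x (by simp)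
    have hy := hmin y (by simp)
    simp only [Finset.mem_insert, Finset.mem_singleton] at hab
    rcases hab with rfl | rfl
    · exact ⟨y, by omega, hb⟩
    · exact ⟨x, by omega, by rwa [Finset.pair_comm]⟩
  have hBex : ∀ a ∈ B, ∃ y, y < a ∧ ({y, a} : Finset ℕ) ∈ ρ := by
    intro a ha
    rw [hB, Finset.mem_filter] at ha
    obtain ⟨-, b, hb, hc, hab, hmin⟩ := ha
    obtain ⟨x, y, hxy, rfl⟩ := Finset.card_eq_two.1 hc
    have hx := hmin x (by simp)
    have hy := hmin y (by simp)
    simp only [Finset.mem_insert, Finset.mem_singleton] at hab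
    rcases hab with rfl | rfl
    · exact ⟨y, by omega, by rwa [Finset.pair_comm]⟩
    · exact ⟨x, by omega, hb⟩
  have hAle : ∀ a ∈ A, a ≤ n - k := by
    intro a ha
    obtain ⟨y, h1, h2⟩ := hAex a ha
    exact (htwo _ _ h1 h2).2.2.1
  have hBle : ∀ a ∈ B, n - k + 1 ≤ a := by
    intro a ha
    obtain ⟨y, h1, h2⟩ := hBex a ha
    exact (htwo _ _ h1 h2).2.2.2
  set eA := A.orderIsoOfFin hAcard with heA
  set eB := B.orderIsoOfFin hBcard with heB
  have hA1 : ∀ s, (eA s : ℕ) ≤ n - k := fun s => hAle _ (eA s).2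
  have hB1 : ∀ s, n - k + 1 ≤ (eB s : ℕ) := fun s => hBle _ (eB s).2
  have hAlt : ∀ s t, (eA s : ℕ) < eA t ↔ s < t := fun s t => by
    rw [Subtype.coe_lt_coe, OrderIso.lt_iff_lt]
  have hBlt : ∀ s t, (eB s : ℕ) < eB t ↔ s < t := fun s t => by
    rw [Subtype.coe_lt_coe, OrderIso.lt_iff_lt]
  let f : Fin j → ℕ × ℕ := fun s => ((eA s : ℕ), (eB (σ s) : ℕ))
  have hf : Function.Injective f := by
    intro s t h
    have h1 : (eA s : ℕ) = eA t := congrArg Prod.fst h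
    exact eA.injective (Subtype.ext h1)
  have key := iota_closed ρ v hv (Finset.Icc 1 n \ (A ∪ B)) (Finset.univ.image f) (by
    intro m
    simp only [Finset.mem_sdiff, Finset.mem_union]
    constructor
    · rintro ⟨h1, h2⟩
      rw [← hsup, Finset.mem_sup] at h1
      obtain ⟨b, hb, hm⟩ := h1
      rcases hcard b hb with hc | hc
      · obtain ⟨x, rfl⟩ := Finset.card_eq_one.1 hc
        simp only [id, Finset.mem_singleton] at hm
        rwa [hm]
      · exfalso
        apply h2
        obtain ⟨x, y, hxy, rfl⟩ := Finset.card_eq_two.1 hc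
        simp only [id, Finset.mem_insert, Finset.mem_singleton] at hm
        rcases lt_or_gt_of_ne hxy with h | h
        · have := htwo _ _ h hb
          rcases hm with rfl | rfl <;> tauto
        · rw [Finset.pair_comm] at hb
          have := htwo _ _ h hb
          rcases hm with rfl | rfl <;> tauto
    · intro h
      refine ⟨hmemI _ h m (by simp), ?_⟩
      rintro (h1 | h1)
      · obtain ⟨y, h2, h3⟩ := hAex m h1
        have := congrArg Finset.card (huniq _ h _ h3 m (by simp) (by simp))
        rw [Finset.card_pair h2.ne] at this
        simp at this
      · obtain ⟨y, h2, h3⟩ := hBex m h1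
        have := congrArg Finset.card (huniq _ h _ h3 m (by simp) (by simp))
        rw [Finset.card_pair h2.ne] at this
        simp at this) (by
    intro p
    rw [Finset.mem_image]
    constructor
    · rintro ⟨s, -, rfl⟩
      refine ⟨?_, (hσ s _).1 rfl⟩
      have := hA1 s
      have := hB1 (σ s)
      show (eA s : ℕ) < eB (σ s)
      omega
    · rintro ⟨h1, h2⟩
      obtain ⟨ha, hb, -⟩ := htwo _ _ h1 h2
      obtain ⟨s, hs⟩ := eA.surjective ⟨_, ha⟩
      obtain ⟨t, ht⟩ := eB.surjective ⟨_, hb⟩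
      have hs' : (eA s : ℕ) = p.1 := by rw [hs]
      have ht' : (eB t : ℕ) = p.2 := by rw [ht]
      have : σ s = t := (hσ s t).2 (by rw [hs', ht']; exact h2)
      refine ⟨s, Finset.mem_univ _, ?_⟩
      ext
      · exact hs'
      · show (eB (σ s) : ℕ) = _
        rw [this, ht'])
  simp only [Finset.sum_image hf.injOn] at key
  have hinv : (∑ s : Fin j, ∑ t : Fin j, if (f s).1 < (f t).1 ∧ (f t).2 < (f s).2 then 1 else 0)
      = ((Finset.univ : Finset (Fin j × Fin j)).filter fun p =>
          p.1 < p.2 ∧ σ p.2 < σ p.1).card := by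
    rw [Finset.card_filter, Fintype.sum_prod_type]
    simp only [f, hAlt, hBlt]
  have hcr : (∑ s : Fin j, ∑ t : Fin j,
        if (f s).1 < (f t).1 ∧ (f t).1 < (f s).2 ∧ (f s).2 < (f t).2 then 1 else 0)
      + (∑ s : Fin j, ∑ t : Fin j, if (f s).1 < (f t).1 ∧ (f t).2 < (f s).2 then 1 else 0)
      = j * (j - 1) / 2 := by
    rw [← count_lt]
    simp only [← Finset.sum_add_distrib]
    refine Finset.sum_congr rfl fun s _ => Finset.sum_congr rfl fun t _ => ?_
    have h1 : (eA t : ℕ) < eB (σ s) := by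
      have := hA1 t
      have := hB1 (σ s)
      omega
    simp only [f, hAlt, hBlt, h1, true_and]
    by_cases hst : s < t
    · have hne : σ s ≠ σ t := fun h => hst.ne (σ.injective h)
      rcases lt_or_gt_of_ne hne with h | h
      · simp [hst, h, h.le]
      · simp [hst, h, h.le]
    · simp [hst]
  have hSsplit : Finset.Icc 1 n \ (A ∪ B)
      = (Finset.Icc 1 (n - k) \ A) ∪ (Finset.Icc (n - k + 1) n \ B) := by
    ext m
    have h1 := hAle m
    have h2 := hBle m
    simp only [Finset.mem_sdiff, Finset.mem_union, Finset.mem_Icc]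
    by_cases ha : m ∈ A <;> by_cases hb : m ∈ B <;> simp only [ha, hb, true_imp_iff] at h1 h2 ⊢ <;>
      simp <;> omega
  have hSdis : Disjoint (Finset.Icc 1 (n - k) \ A) (Finset.Icc (n - k + 1) n \ B) := by
    rw [Finset.disjoint_left]
    intro m h1 h2
    simp only [Finset.mem_sdiff, Finset.mem_Icc] at h1 h2
    omega
  have hsumA : ∀ g : ℕ → ℕ, ∑ s, g (eA s) = ∑ a ∈ A, g a := by
    intro g
    rw [← Finset.sum_coe_sort A]
    exact Equiv.sum_comp eA.toEquiv (fun a => g a)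
  have hsumB : ∀ g : ℕ → ℕ, ∑ s, g (eB (σ s)) = ∑ a ∈ B, g a := by
    intro g
    rw [← Finset.sum_coe_sort B, Equiv.sum_comp σ (fun s => g (eB s))]
    exact Equiv.sum_comp eB.toEquiv (fun a => g a)
  have hL : (∑ m ∈ Finset.Icc 1 (n - k) \ A, ∑ s, if (f s).1 < m ∧ m < (f s).2 then 1 else 0)
      = (((Finset.Icc 1 (n - k) \ A) ×ˢ A).filter fun p => p.2 < p.1).card := by
    rw [Finset.card_filter, Finset.sum_product]
    refine Finset.sum_congr rfl fun m hm => ?_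
    rw [← hsumA (fun a => if a < m then 1 else 0)]
    refine Finset.sum_congr rfl fun s _ => ?_
    have := hB1 (σ s)
    simp only [Finset.mem_sdiff, Finset.mem_Icc] at hm
    have h3 : m < eB (σ s) := by omega
    simp [f, h3]
  have hR : (∑ m ∈ Finset.Icc (n - k + 1) n \ B, ∑ s, if (f s).1 < m ∧ m < (f s).2 then 1 else 0)
      = (((Finset.Icc (n - k + 1) n \ B) ×ˢ B).filter fun p => p.1 < p.2).card := by
    rw [Finset.card_filter, Finset.sum_product]
    refine Finset.sum_congr rfl fun m hm => ?_
    rw [← hsumB (fun a => if m < a then 1 else 0)]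
    refine Finset.sum_congr rfl fun s _ => ?_
    have := hA1 s
    simp only [Finset.mem_sdiff, Finset.mem_Icc] at hm
    have h3 : (eA s : ℕ) < m := by omega
    simp [f, h3]
  rw [hSsplit, Finset.sum_union hSdis, hL, hR] at key
  rw [← hinv]
  omega
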